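/- arXiv:2010.07537 — 2 statements merged into one kernel-verified Lean document; each statement's English description precedes it below -/
import Mathlib

section
/- For every N ∈ ℕ there exists an algorithm (a computable function with values in Bool, with respect to a standard encoding of the inputs) that, given a finite subset X ⊆ ℤ^N and an element b ∈ ℤ^N, decides whether there exists an element v ∈ Span_ℤ(X) + b whose N entries generate ℤ, i.e., whose entries have greatest common divisor 1. -/
/-!
A vector is unimodular exactly when no maximal ideal contains all its entries. If `Span(X) + b`
contains such a vector, the entries of `X` and `b` generate the unit ideal. Suppose that they do.

* If some `u ∈ Span(X)` and some `c ∈ Span(X) + b` are not proportional, a unimodular vector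
  exists. The Chinese remainder theorem avoids any finite set of primes at once: choose `c` with an
  entry outside every prime containing a fixed nonzero entry of `u`, while keeping a minor
  `u i * c j - u j * c i` nonzero. This minor is the same for all `c + t • u`, so a prime
  containing all entries of `c + t • u` divides it, and `t` has to avoid finitely many primes only.
* If all vectors of `X` and `b` are proportional, they are multiples of a single unimodular vector
  `e`. Then `b = β • e` and `Span(X) = I • e` for the ideal `I` generated by the entries of `X`, and
  the question is whether `β + I` contains a unit.

Over `ℤ` the units are `± 1` and the ideals are generated by greatest common divisors, so both
conditions can be checked by a primitive recursive function.
-/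

namespace UnimodularTranslate

section Unimodular

variable {R ι : Type*} [CommRing R]

/-- A vector is unimodular if its entries generate the unit ideal. -/
def IsUnimodular (v : ι → R) : Prop :=
  Ideal.span (Set.range v) = ⊤

/-- The content of a set of vectors: the ideal generated by all their entries. -/
def contentIdeal (S : Set (ι → R)) : Ideal R :=
  Ideal.span {r | ∃ v ∈ S, ∃ i, v i = r}

/-- Two vectors are proportional if all the `2 × 2` minors of the matrix with these two rows vanish.
In particular the zero vector is proportional to every vector. -/
def Proportional (u v : ι → R) : Prop :=
  ∀ i j, u i * v j = u j * v i

theorem isUnimodular_iff_forall_maximalSpectrum {v : ι → R} :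
    IsUnimodular v ↔ ∀ P : MaximalSpectrum R, ∃ i, v i ∉ P.asIdeal := by
  rw [IsUnimodular, ← not_iff_not, ← Ne, Ideal.ne_top_iff_exists_maximal]
  push Not
  simp only [Ideal.span_le, Set.range_subset_iff, SetLike.mem_coe]
  exact ⟨fun ⟨P, hP, h⟩ => ⟨⟨P, hP⟩, h⟩, fun ⟨P, h⟩ => ⟨P.asIdeal, P.isMaximal, h⟩⟩

theorem contentIdeal_le_iff {S : Set (ι → R)} {J : Ideal R} :
    contentIdeal S ≤ J ↔ ∀ v ∈ S, ∀ i, v i ∈ J := by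
  rw [contentIdeal, Ideal.span_le]
  exact ⟨fun h v hv i => h ⟨v, hv, i, rfl⟩, fun h _ ⟨v, hv, i, hr⟩ => hr ▸ h v hv i⟩

theorem apply_mem_contentIdeal {S : Set (ι → R)} {v : ι → R} (hv : v ∈ S) (i : ι) :
    v i ∈ contentIdeal S :=
  contentIdeal_le_iff.mp le_rfl v hv i

theorem contentIdeal_span (S : Set (ι → R)) :
    contentIdeal (Submodule.span R S : Set (ι → R)) = contentIdeal S := by
  refine le_antisymm ?_ (contentIdeal_le_iff.mpr fun v hv i =>
    apply_mem_contentIdeal (Submodule.subset_span hv) i)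
  have h : Submodule.span R S ≤ Submodule.pi Set.univ fun _ => contentIdeal S :=
    Submodule.span_le.mpr fun v hv i _ => apply_mem_contentIdeal hv i
  exact contentIdeal_le_iff.mpr fun v hv i => h hv i trivial

theorem contentIdeal_singleton (v : ι → R) : contentIdeal {v} = Ideal.span (Set.range v) := by
  simp only [contentIdeal, Set.mem_singleton_iff, exists_eq_left]
  rfl

theorem contentIdeal_insert (v : ι → R) (S : Set (ι → R)) :
    contentIdeal (insert v S) = contentIdeal {v} ⊔ contentIdeal S := by
  refine eq_of_forall_ge_iff fun J => ?_
  simp only [sup_le_iff, contentIdeal_le_iff, Set.forall_mem_insert, Set.mem_singleton_iff,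
    forall_eq]

theorem contentIdeal_singleton_smul (r : R) (v : ι → R) :
    contentIdeal {r • v} = Ideal.span {r} * contentIdeal {v} := by
  rw [contentIdeal_singleton, contentIdeal_singleton, Ideal.span_mul_span', Set.singleton_mul,
    ← Set.range_comp]
  rfl

theorem IsUnimodular.contentIdeal_singleton_smul {e : ι → R} (he : IsUnimodular e) (r : R) :
    contentIdeal {r • e} = Ideal.span {r} := by
  rw [UnimodularTranslate.contentIdeal_singleton_smul, contentIdeal_singleton, he, Ideal.mul_top]

theorem IsUnimodular.smul_iff_isUnit {e : ι → R} (he : IsUnimodular e) {r : R} :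
    IsUnimodular (r • e) ↔ IsUnit r := by
  rw [IsUnimodular, ← contentIdeal_singleton, he.contentIdeal_singleton_smul,
    Ideal.span_singleton_eq_top]

theorem forall_add_apply_mem_iff {L : Submodule R (ι → R)} {b : ι → R} {J : Ideal R} :
    (∀ w ∈ L, ∀ i, (w + b) i ∈ J) ↔ contentIdeal (insert b (L : Set (ι → R))) ≤ J := by
  rw [contentIdeal_le_iff, Set.forall_mem_insert]
  constructor
  · intro h
    have hb : ∀ i, b i ∈ J := fun i => by simpa using h 0 L.zero_mem i
    exact ⟨hb, fun w hw i => (J.add_mem_iff_left (hb i)).mp (h w hw i)⟩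
  · exact fun ⟨hb, hL⟩ w hw i => J.add_mem (hL w hw i) (hb i)

theorem Proportional.refl (v : ι → R) : Proportional v v :=
  fun _ _ => mul_comm _ _

theorem Proportional.symm {u v : ι → R} (h : Proportional u v) : Proportional v u :=
  fun i j => by linear_combination h j i

theorem Proportional.of_mem_span {S : Set (ι → R)} {u v : ι → R}
    (h : ∀ x ∈ S, Proportional x v) (hu : u ∈ Submodule.span R S) : Proportional u v := by
  induction hu using Submodule.span_induction with
  | mem x hx => exact h x hx
  | zero => simp [Proportional]
  | add x y _ _ hx hy =>
    intro i j
    simp only [Pi.add_apply]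
    linear_combination hx i j + hy i j
  | smul r x _ hx =>
    intro i j
    simp only [Pi.smul_apply, smul_eq_mul]
    linear_combination r * hx i j

theorem proportional_of_mem_span_of_mem_span {S : Set (ι → R)} {u v : ι → R}
    (h : ∀ x ∈ S, ∀ y ∈ S, Proportional x y) (hu : u ∈ Submodule.span R S)
    (hv : v ∈ Submodule.span R S) : Proportional u v :=
  .of_mem_span (fun x hx => (Proportional.of_mem_span (fun y hy => h y hy x hx) hv).symm) hu

theorem exists_not_proportional_add {L : Submodule R (ι → R)} {b u v : ι → R}
    (hu : u ∈ insert b (L : Set (ι → R))) (hv : v ∈ insert b (L : Set (ι → R)))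
    (huv : ¬ Proportional u v) :
    ∃ x ∈ L, ∃ w ∈ L, ¬ Proportional x (w + b) := by
  contrapose! huv
  have hb : ∀ x ∈ L, Proportional x b := fun x hx => by simpa using huv x hx 0 L.zero_mem
  rcases hu with rfl | hu <;> rcases hv with rfl | hv
  · exact .refl _
  · exact (hb v hv).symm
  · exact hb u hu
  · intro i j
    have hvb := huv u hu v hv i j
    simp only [Pi.add_apply] at hvb
    linear_combination hvb - hb u hu i j

theorem IsUnimodular.proportional_iff_mem_span_singleton {e u : ι → R} (he : IsUnimodular e) :
    Proportional u e ↔ u ∈ Submodule.span R {e} := by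
  refine ⟨fun h => ?_, .of_mem_span fun x hx => hx ▸ .refl e⟩
  have hrange : Ideal.span (Set.range e) ≤
      (Submodule.span R {e}).comap (LinearMap.toSpanSingleton R (ι → R) u) := by
    rw [Ideal.span_le]
    rintro _ ⟨i, rfl⟩
    refine Submodule.mem_span_singleton.mpr ⟨u i, funext fun j => ?_⟩
    simp only [LinearMap.toSpanSingleton_apply, Pi.smul_apply, smul_eq_mul]
    linear_combination h i j
  simpa using hrange (he ▸ Submodule.mem_top : (1 : R) ∈ Ideal.span (Set.range e))

theorem IsUnimodular.smul_mem_iff_mem_contentIdeal {L : Submodule R (ι → R)} {e : ι → R}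
    (he : IsUnimodular e) (hL : L ≤ Submodule.span R {e}) {r : R} :
    r • e ∈ L ↔ r ∈ contentIdeal (L : Set (ι → R)) := by
  constructor
  · intro hr
    have hle : contentIdeal {r • e} ≤ contentIdeal (L : Set (ι → R)) :=
      contentIdeal_le_iff.mpr fun v hv i => apply_mem_contentIdeal (hv ▸ hr) i
    rw [he.contentIdeal_singleton_smul] at hle
    exact hle (Ideal.mem_span_singleton_self r)
  · have hle : contentIdeal (L : Set (ι → R)) ≤
        L.comap (LinearMap.toSpanSingleton R (ι → R) e) := by
      refine contentIdeal_le_iff.mpr fun v hv i => ?_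
      obtain ⟨s, rfl⟩ := Submodule.mem_span_singleton.mp (hL hv)
      simpa [mul_comm s, mul_smul] using L.smul_mem (e i) hv
    exact fun hr => hle hr

theorem exists_mem_forall_exists_add_apply_notMem {κ : Type*} [Finite κ] {P : κ → Ideal R}
    (hP : Pairwise (Function.onFun IsCoprime P)) {L : Submodule R (ι → R)} {b : ι → R}
    (h : ∀ k, ∃ w ∈ L, ∃ i, (w + b) i ∉ P k) :
    ∃ w ∈ L, ∀ k, ∃ i, (w + b) i ∉ P k := by
  classical
  cases nonempty_fintype κ
  choose w hwL i hi using h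
  choose c hc using fun k => Ideal.exists_forall_sub_mem_ideal hP (Pi.single k 1)
  refine ⟨∑ k, c k • w k, L.sum_mem fun k _ => L.smul_mem _ (hwL k), fun j => ⟨i j, fun hj => ?_⟩⟩
  have hcongr : ∑ k, (c k - (Pi.single k 1 : κ → R) j) * w k (i j) ∈ P j :=
    (P j).sum_mem fun k _ => (P j).mul_mem_right _ (hc k j)
  have hdiff : (∑ k, c k • w k + b) (i j) - (w j + b) (i j) =
      ∑ k, (c k - (Pi.single k 1 : κ → R) j) * w k (i j) := by
    simp [sub_mul, Finset.sum_sub_distrib, Pi.single_apply]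
  exact hi j (((P j).sub_mem_iff_right hj).mp (hdiff ▸ hcongr))

theorem exists_mem_minor_ne_zero_and_dvd_sub [IsDomain R] {L : Submodule R (ι → R)}
    {b u w₀ w₁ : ι → R} {i j : ι} {m : R} (hm : m ≠ 0) (hw₀ : w₀ ∈ L) (hw₁ : w₁ ∈ L)
    (hminor : u i * (w₀ + b) j - u j * (w₀ + b) i ≠ 0) :
    ∃ w ∈ L, u i * (w + b) j - u j * (w + b) i ≠ 0 ∧ ∀ k, m ∣ (w + b) k - (w₁ + b) k := by
  by_cases hw₁minor : u i * (w₁ + b) j - u j * (w₁ + b) i = 0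
  · refine ⟨w₁ + m • (w₀ - w₁), L.add_mem hw₁ (L.smul_mem _ (L.sub_mem hw₀ hw₁)), ?_,
      fun k => ⟨(w₀ - w₁) k, ?_⟩⟩
    · convert mul_ne_zero hm hminor using 1
      simp only [Pi.add_apply, Pi.smul_apply, Pi.sub_apply, smul_eq_mul] at hw₁minor ⊢
      linear_combination (1 - m) * hw₁minor
    · simp only [Pi.add_apply, Pi.smul_apply, smul_eq_mul]
      ring
  · exact ⟨w₁, hw₁, hw₁minor, fun k => by simp⟩

end Unimodular

section Dedekind

variable {R ι : Type*} [CommRing R] [IsDedekindDomain R]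

theorem finite_setOf_mem_maximalSpectrum {m : R} (hm : m ≠ 0) :
    {P : MaximalSpectrum R | m ∈ P.asIdeal}.Finite := by
  let _ := UniqueFactorizationMonoid.fintypeSubtypeDvd (Ideal.span {m})
    (Ideal.span_singleton_eq_bot.not.mpr hm)
  have hfinite : {P : Ideal R | P ∣ Ideal.span {m}}.Finite :=
    Set.finite_coe_iff.mp (inferInstanceAs (Finite {P : Ideal R // P ∣ Ideal.span {m}}))
  exact (hfinite.preimage (f := MaximalSpectrum.asIdeal)
    fun _ _ _ _ => MaximalSpectrum.ext).subset fun _ hP =>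
    Ideal.dvd_span_singleton.mpr hP

theorem exists_mem_forall_maximalSpectrum_exists_add_apply_notMem {L : Submodule R (ι → R)}
    {b : ι → R} {m : R} (hm : m ≠ 0)
    (h : ∀ P : MaximalSpectrum R, ∃ w ∈ L, ∃ i, (w + b) i ∉ P.asIdeal) :
    ∃ w ∈ L, ∀ P : MaximalSpectrum R, m ∈ P.asIdeal → ∃ i, (w + b) i ∉ P.asIdeal := by
  have := (finite_setOf_mem_maximalSpectrum hm).to_subtype
  obtain ⟨w, hw, hwP⟩ := exists_mem_forall_exists_add_apply_notMem
    (P := fun P : {P : MaximalSpectrum R | m ∈ P.asIdeal} => P.1.asIdeal)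
    (fun P Q hPQ => MaximalSpectrum.isCoprime_of_ne (Subtype.coe_ne_coe.mpr hPQ)) fun P => h P
  exact ⟨w, hw, fun P hP => hwP ⟨P, hP⟩⟩

theorem exists_isUnimodular_add_of_minor_ne_zero {u b : ι → R} {i j : ι}
    (hminor : u i * b j - u j * b i ≠ 0)
    (h : ∀ P : MaximalSpectrum R, (∀ k, u k ∈ P.asIdeal) → ∃ k, b k ∉ P.asIdeal) :
    ∃ t : R, IsUnimodular (t • u + b) := by
  have hlocal : ∀ P : MaximalSpectrum R,
      ∃ w ∈ Submodule.span R {u}, ∃ k, (w + b) k ∉ P.asIdeal := by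
    intro P
    by_contra! hP
    have hb : ∀ k, b k ∈ P.asIdeal := fun k => by simpa using hP 0 (zero_mem _) k
    obtain ⟨k, hk⟩ := h P fun k => (P.asIdeal.add_mem_iff_left (hb k)).mp
      (hP u (Submodule.mem_span_singleton_self u) k)
    exact hk (hb k)
  obtain ⟨w, hw, hwP⟩ :=
    exists_mem_forall_maximalSpectrum_exists_add_apply_notMem hminor hlocal
  obtain ⟨t, rfl⟩ := Submodule.mem_span_singleton.mp hw
  refine ⟨t, isUnimodular_iff_forall_maximalSpectrum.mpr fun P => ?_⟩
  by_contra! hP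
  have hminorP : u i * (t • u + b) j - u j * (t • u + b) i ∈ P.asIdeal :=
    sub_mem (P.asIdeal.mul_mem_left _ (hP j)) (P.asIdeal.mul_mem_left _ (hP i))
  have hinvariant : u i * (t • u + b) j - u j * (t • u + b) i = u i * b j - u j * b i := by
    simp only [Pi.add_apply, Pi.smul_apply, smul_eq_mul]
    ring
  obtain ⟨k, hk⟩ := hwP P (hinvariant ▸ hminorP)
  exact hk (hP k)

theorem exists_isUnimodular_add_of_not_proportional {L : Submodule R (ι → R)} {b u w₀ : ι → R}
    (hcontent : contentIdeal (insert b (L : Set (ι → R))) = ⊤) (hu : u ∈ L) (hw₀ : w₀ ∈ L)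
    (h : ¬ Proportional u (w₀ + b)) :
    ∃ w ∈ L, IsUnimodular (w + b) := by
  have hlocal : ∀ P : MaximalSpectrum R, ∃ w ∈ L, ∃ i, (w + b) i ∉ P.asIdeal := by
    intro P
    by_contra! hP
    exact P.isMaximal.ne_top (top_le_iff.mp (hcontent ▸ forall_add_apply_mem_iff.mp hP))
  obtain ⟨i, j, hij⟩ : ∃ i j, u i * (w₀ + b) j - u j * (w₀ + b) i ≠ 0 := by
    simpa [Proportional, sub_eq_zero] using h
  obtain ⟨k, hk⟩ : ∃ k, u k ≠ 0 := by
    by_contra! hu0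
    simp [hu0] at hij
  obtain ⟨w₁, hw₁, hw₁P⟩ := exists_mem_forall_maximalSpectrum_exists_add_apply_notMem hk hlocal
  obtain ⟨w₂, hw₂, hw₂minor, hw₂congr⟩ := exists_mem_minor_ne_zero_and_dvd_sub hk hw₀ hw₁ hij
  have hw₂P : ∀ P : MaximalSpectrum R, u k ∈ P.asIdeal → ∃ r, (w₂ + b) r ∉ P.asIdeal := by
    intro P hP
    obtain ⟨r, hr⟩ := hw₁P P hP
    exact ⟨r, fun hmem => hr ((P.asIdeal.sub_mem_iff_right hmem).mp
      (P.asIdeal.mem_of_dvd (hw₂congr r) hP))⟩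
  obtain ⟨t, ht⟩ := exists_isUnimodular_add_of_minor_ne_zero hw₂minor fun P hP => hw₂P P (hP k)
  exact ⟨t • u + w₂, L.add_mem (L.smul_mem _ hu) hw₂, by rwa [add_assoc]⟩

end Dedekind

section PrincipalIdeal

variable {R ι : Type*} [CommRing R] [IsDomain R] [IsPrincipalIdealRing R]

theorem exists_isUnimodular_eq_smul {v : ι → R} (hv : v ≠ 0) :
    ∃ (e : ι → R) (r : R), IsUnimodular e ∧ r ≠ 0 ∧ v = r • e := by
  obtain ⟨r, hr⟩ := (IsPrincipalIdealRing.principal (Ideal.span (Set.range v))).principal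
  have hdvd : ∀ i, r ∣ v i := fun i =>
    Ideal.mem_span_singleton.mp (hr.le (Ideal.subset_span (Set.mem_range_self i)))
  choose e he using hdvd
  obtain rfl : v = r • e := funext he
  have hr0 : r ≠ 0 := left_ne_zero_of_smul hv
  refine ⟨e, r, (Ideal.span_singleton_mul_right_inj hr0).mp ?_, hr0, rfl⟩
  rw [← contentIdeal_singleton, ← contentIdeal_singleton_smul, contentIdeal_singleton, hr,
    Ideal.mul_top]

theorem exists_isUnimodular_forall_mem_span_singleton {S : Set (ι → R)}
    (hS : ∀ u ∈ S, ∀ v ∈ S, Proportional u v) (hcontent : contentIdeal S ≠ ⊥) :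
    ∃ e, IsUnimodular e ∧ ∀ v ∈ S, v ∈ Submodule.span R {e} := by
  obtain ⟨y, hyS, hy⟩ : ∃ y ∈ S, y ≠ 0 := by
    contrapose! hcontent
    exact le_bot_iff.mp (contentIdeal_le_iff.mpr fun v hv i => by simp [hcontent v hv])
  obtain ⟨e, r, he, hr, rfl⟩ := exists_isUnimodular_eq_smul hy
  refine ⟨e, he, fun v hv => he.proportional_iff_mem_span_singleton.mp fun i j =>
    mul_left_cancel₀ hr ?_⟩
  have hvy := hS v hv _ hyS i j
  simp only [Pi.smul_apply, smul_eq_mul] at hvy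
  linear_combination hvy

theorem exists_isUnimodular_add_iff_of_proportional {L : Submodule R (ι → R)} {b : ι → R} {β : R}
    (hβ : contentIdeal {b} = Ideal.span {β})
    (hcontent : contentIdeal (insert b (L : Set (ι → R))) = ⊤)
    (h : ∀ u ∈ insert b (L : Set (ι → R)), ∀ v ∈ insert b (L : Set (ι → R)), Proportional u v) :
    (∃ w ∈ L, IsUnimodular (w + b)) ↔
      ∃ c : Rˣ, (c : R) - β ∈ contentIdeal (L : Set (ι → R)) := by
  obtain ⟨e, he, hL, hb⟩ : ∃ e, IsUnimodular e ∧ L ≤ Submodule.span R {e} ∧ b = β • e := by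
    obtain ⟨e, he, hmem⟩ := exists_isUnimodular_forall_mem_span_singleton h (by simp [hcontent])
    obtain ⟨t, rfl⟩ := Submodule.mem_span_singleton.mp (hmem b (Set.mem_insert _ _))
    rw [he.contentIdeal_singleton_smul, Ideal.span_singleton_eq_span_singleton] at hβ
    obtain ⟨c, rfl⟩ := hβ.symm
    refine ⟨(c : R) • e, he.smul_iff_isUnit.mpr c.isUnit, fun v hv => ?_, by module⟩
    rw [Submodule.span_singleton_smul_eq c.isUnit]
    exact hmem v (Set.mem_insert_of_mem _ hv)
  constructor
  · rintro ⟨w, hw, hunimodular⟩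
    obtain ⟨s, rfl⟩ := Submodule.mem_span_singleton.mp (hL hw)
    rw [hb, ← add_smul, he.smul_iff_isUnit] at hunimodular
    obtain ⟨c, hc⟩ := hunimodular
    exact ⟨c, (he.smul_mem_iff_mem_contentIdeal hL).mp (by rwa [hc, add_sub_cancel_right])⟩
  · rintro ⟨c, hc⟩
    refine ⟨((c : R) - β) • e, (he.smul_mem_iff_mem_contentIdeal hL).mpr hc, ?_⟩
    rw [hb, ← add_smul, sub_add_cancel]
    exact he.smul_iff_isUnit.mpr c.isUnit

theorem exists_isUnimodular_add_iff (S : Set (ι → R)) {b : ι → R} {β : R}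
    (hβ : contentIdeal {b} = Ideal.span {β}) :
    (∃ w ∈ Submodule.span R S, IsUnimodular (w + b)) ↔
      contentIdeal (insert b S) = ⊤ ∧
        ((∀ u ∈ insert b S, ∀ v ∈ insert b S, Proportional u v) →
          ∃ c : Rˣ, (c : R) - β ∈ contentIdeal S) := by
  have hcontent : contentIdeal (insert b (Submodule.span R S : Set (ι → R))) =
      contentIdeal (insert b S) := by
    rw [contentIdeal_insert, contentIdeal_span, ← contentIdeal_insert]
  have hsubset : insert b (Submodule.span R S : Set (ι → R)) ⊆ Submodule.span R (insert b S) :=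
    Set.insert_subset (Submodule.subset_span (Set.mem_insert _ _))
      (Submodule.span_mono (Set.subset_insert _ _))
  constructor
  · rintro ⟨w, hw, hunimodular⟩
    have htop : contentIdeal (insert b (Submodule.span R S : Set (ι → R))) = ⊤ := by
      rw [← top_le_iff, ← hunimodular, Ideal.span_le]
      rintro _ ⟨i, rfl⟩
      exact forall_add_apply_mem_iff.mpr le_rfl w hw i
    refine ⟨hcontent ▸ htop, fun h => ?_⟩
    rw [← contentIdeal_span S]
    exact (exists_isUnimodular_add_iff_of_proportional hβ htop fun u hu v hv =>
      proportional_of_mem_span_of_mem_span h (hsubset hu) (hsubset hv)).mp ⟨w, hw, hunimodular⟩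
  · rintro ⟨htop, hunit⟩
    rw [← hcontent] at htop
    by_cases h : ∀ u ∈ insert b (Submodule.span R S : Set (ι → R)),
        ∀ v ∈ insert b (Submodule.span R S : Set (ι → R)), Proportional u v
    · rw [exists_isUnimodular_add_iff_of_proportional hβ htop h, contentIdeal_span]
      have hsub := Set.insert_subset_insert (a := b) (Submodule.subset_span (R := R) (s := S))
      exact hunit fun u hu v hv => h u (hsub hu) v (hsub hv)
    · push Not at h
      obtain ⟨u, hu, v, hv, huv⟩ := h
      obtain ⟨x, hx, w, hw, hxw⟩ := exists_not_proportional_add hu hv huv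
      exact exists_isUnimodular_add_of_not_proportional htop hx hw hxw

end PrincipalIdeal

section Computability

theorem primrec_intEquivNatSumNat : Primrec Equiv.intEquivNatSumNat := by
  refine Primrec.encode_iff.mp (Primrec.encode.of_eq ?_)
  rintro (n | n) <;> rfl

theorem primrec_intEquivNatSumNat_symm : Primrec Equiv.intEquivNatSumNat.symm := by
  refine Primrec.encode_iff.mp (Primrec.encode.of_eq ?_)
  rintro (n | n) <;> rfl

theorem primrec_int_ofNat : Primrec Int.ofNat :=
  primrec_intEquivNatSumNat_symm.comp Primrec.sumInl

theorem primrec_int_negSucc : Primrec Int.negSucc :=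
  primrec_intEquivNatSumNat_symm.comp Primrec.sumInr

theorem primrec_int_casesOn {α σ : Type*} [Primcodable α] [Primcodable σ] {f : α → ℤ}
    {g h : α → ℕ → σ} (hf : Primrec f) (hg : Primrec₂ g) (hh : Primrec₂ h) :
    Primrec fun a => (Int.casesOn (f a) (g a) (h a) : σ) :=
  (Primrec.sumCasesOn (primrec_intEquivNatSumNat.comp hf) hg hh).of_eq fun a => by
    cases f a <;> rfl

theorem primrec_int_natAbs : Primrec Int.natAbs :=
  (primrec_int_casesOn .id .right (Primrec.succ.comp₂ .right)).of_eq fun z => by cases z <;> rfl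

theorem primrec_int_negOfNat : Primrec Int.negOfNat :=
  (Primrec.nat_casesOn .id (.const 0) (primrec_int_negSucc.comp₂ .right)).of_eq fun n => by
    cases n <;> rfl

theorem primrec_int_neg : Primrec fun z : ℤ => -z :=
  (primrec_int_casesOn .id (primrec_int_negOfNat.comp₂ .right)
    (primrec_int_ofNat.comp₂ (Primrec.succ.comp₂ .right))).of_eq fun z => by cases z <;> rfl

theorem primrec₂_int_mul : Primrec₂ ((· * ·) : ℤ → ℤ → ℤ) := by
  have hnatMul : Primrec₂ fun (m : ℕ) (z : ℤ) => (m : ℤ) * z := by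
    refine (primrec_int_casesOn .snd
      (primrec_int_ofNat.comp₂ (Primrec.nat_mul.comp₂ (Primrec.fst.comp₂ .left) .right))
      (primrec_int_negOfNat.comp₂ (Primrec.nat_mul.comp₂ (Primrec.fst.comp₂ .left)
        (Primrec.succ.comp₂ .right)))).of_eq ?_
    rintro ⟨m, n | n⟩ <;> rfl
  refine (primrec_int_casesOn .fst (hnatMul.comp₂ .right (Primrec.snd.comp₂ .left))
    (primrec_int_neg.comp₂ (hnatMul.comp₂ (Primrec.succ.comp₂ .right)
      (Primrec.snd.comp₂ .left)))).of_eq ?_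
  rintro ⟨m | m, n⟩
  · rfl
  · exact (Int.neg_mul _ _).symm

theorem primrecRel_nat_dvd : PrimrecRel ((· ∣ ·) : ℕ → ℕ → Prop) :=
  (Primrec.eq.comp (Primrec.nat_mod.comp .snd .fst) (.const 0)).of_eq fun _ =>
    (Nat.dvd_iff_mod_eq_zero ..).symm

theorem primrec₂_nat_gcd : Primrec₂ Nat.gcd := by
  have hdvd : PrimrecRel fun (p : ℕ × ℕ) d => d ∣ p.1 ∧ d ∣ p.2 :=
    (primrecRel_nat_dvd.comp₂ .right (Primrec.fst.comp₂ .left)).and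
      (primrecRel_nat_dvd.comp₂ .right (Primrec.snd.comp₂ .left))
  refine (Primrec.nat_findGreatest Primrec.nat_add hdvd).of_eq fun ⟨m, n⟩ => ?_
  simp only [← Nat.dvd_gcd_iff]
  rw [Nat.findGreatest_eq_iff]
  refine ⟨?_, fun _ => dvd_rfl, ?_⟩
  · rcases (m + n).eq_zero_or_pos with h | h
    · simp_all
    · exact Nat.le_of_dvd h (dvd_add (Nat.gcd_dvd_left m n) (Nat.gcd_dvd_right m n))
  · intro d hlt hle hd
    exact hlt.not_ge (Nat.le_of_dvd (Nat.gcd_pos_iff.mpr (by omega)) hd)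

/-- The nonnegative greatest common divisor of a list of integers, with value `0` on the empty
list. -/
def natGcd (l : List ℤ) : ℕ :=
  l.foldr (fun z d => Nat.gcd z.natAbs d) 0

theorem span_natGcd (l : List ℤ) :
    Ideal.span {(natGcd l : ℤ)} = Ideal.span {z | z ∈ l} := by
  induction l with
  | nil => simp [natGcd]
  | cons a l ih =>
    have hset : {z | z ∈ a :: l} = insert a {z | z ∈ l} := by ext; simp
    have hgcd : (natGcd (a :: l) : ℤ) = gcd a (natGcd l : ℤ) := rfl
    rw [hset, Ideal.span_insert, ← ih, hgcd, span_gcd, Ideal.span_insert]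

theorem primrec_natGcd : Primrec natGcd :=
  Primrec.list_foldr .id (.const 0) <|
    primrec₂_nat_gcd.comp₂ (primrec_int_natAbs.comp₂ (Primrec.fst.comp₂ .right))
      (Primrec.snd.comp₂ .right)

end Computability

section Criterion

variable {N : ℕ}

/-- The greatest common divisor of all the entries of a list of integer vectors, that is, the
nonnegative generator of its content ideal. -/
def entriesGcd (X : List (Fin N → ℤ)) : ℕ :=
  natGcd (X.flatMap List.ofFn)

theorem contentIdeal_eq_span_entriesGcd (X : List (Fin N → ℤ)) :
    contentIdeal {v | v ∈ X} = Ideal.span {(entriesGcd X : ℤ)} := by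
  rw [entriesGcd, span_natGcd, contentIdeal]
  simp only [List.mem_flatMap, List.mem_ofFn, Set.mem_ofPred_eq]

theorem primrec_entriesGcd : Primrec (entriesGcd (N := N)) := by
  have hofFn : Primrec fun v : Fin N → ℤ => List.ofFn v :=
    Primrec.list_ofFn fun i => Primrec.fin_app.comp .id (.const i)
  exact primrec_natGcd.comp (Primrec.list_flatMap .id (hofFn.comp .snd))

/-- The arithmetic criterion for the existence of a unimodular vector in `Span_ℤ(X) + b`: the
entries of `X` and `b` have no common factor, and if all these vectors are proportional then the
content of `b` is congruent to `1` or to `-1` modulo the content of `X`. -/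
def TranslateCriterion (X : List (Fin N → ℤ)) (b : Fin N → ℤ) : Prop :=
  entriesGcd (b :: X) = 1 ∧
    ((∀ u ∈ b :: X, ∀ v ∈ b :: X, Proportional u v) →
      entriesGcd [b] ≡ 1 [MOD entriesGcd X] ∨ entriesGcd X ∣ entriesGcd [b] + 1)

theorem exists_intUnit_sub_mem_span_iff {m n : ℕ} :
    (∃ c : ℤˣ, (c : ℤ) - m ∈ Ideal.span {(n : ℤ)}) ↔ m ≡ 1 [MOD n] ∨ n ∣ m + 1 := by
  simp only [Ideal.mem_span_singleton]
  have hone : (n : ℤ) ∣ ((1 : ℤˣ) : ℤ) - m ↔ m ≡ 1 [MOD n] := by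
    rw [← Int.natCast_modEq_iff, Int.modEq_iff_dvd]
    rfl
  have hnegOne : (n : ℤ) ∣ ((-1 : ℤˣ) : ℤ) - m ↔ n ∣ m + 1 := by
    rw [← Int.natCast_dvd_natCast, ← dvd_neg]
    congr! 1
    push_cast
    ring
  rw [← hone, ← hnegOne]
  constructor
  · rintro ⟨c, hc⟩
    rcases Int.units_eq_one_or c with rfl | rfl
    exacts [.inl hc, .inr hc]
  · rintro (h | h)
    exacts [⟨1, h⟩, ⟨-1, h⟩]

theorem exists_isUnimodular_add_iff_translateCriterion (X : List (Fin N → ℤ)) (b : Fin N → ℤ) :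
    (∃ w ∈ Submodule.span ℤ {v | v ∈ X}, IsUnimodular (w + b)) ↔ TranslateCriterion X b := by
  have hb : contentIdeal {b} = Ideal.span {(entriesGcd [b] : ℤ)} := by
    rw [← contentIdeal_eq_span_entriesGcd]
    simp
  have hcons : insert b {v | v ∈ X} = {v | v ∈ b :: X} := by ext; simp
  rw [exists_isUnimodular_add_iff _ hb, hcons, contentIdeal_eq_span_entriesGcd,
    contentIdeal_eq_span_entriesGcd, exists_intUnit_sub_mem_span_iff, Ideal.span_singleton_eq_top,
    Int.isUnit_iff_natAbs_eq, Int.natAbs_natCast]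
  rfl

theorem primrecRel_proportional : PrimrecRel (Proportional (R := ℤ) (ι := Fin N)) := by
  have hleft : Primrec fun p : (Fin N → ℤ) × (Fin N → ℤ) => fun i j => p.1 i * p.2 j := by
    refine Primrec.fin_curry.mpr (Primrec.fin_curry.mpr ?_)
    exact primrec₂_int_mul.comp₂
      (Primrec.fin_app.comp (Primrec.fst.comp (Primrec.fst.comp .fst)) (Primrec.snd.comp .fst))
      (Primrec.fin_app.comp (Primrec.snd.comp (Primrec.fst.comp .fst)) .snd)
  have hright : Primrec fun p : (Fin N → ℤ) × (Fin N → ℤ) => fun i j => p.1 j * p.2 i := by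
    refine Primrec.fin_curry.mpr (Primrec.fin_curry.mpr ?_)
    exact primrec₂_int_mul.comp₂
      (Primrec.fin_app.comp (Primrec.fst.comp (Primrec.fst.comp .fst)) .snd)
      (Primrec.fin_app.comp (Primrec.snd.comp (Primrec.fst.comp .fst)) (Primrec.snd.comp .fst))
  exact (Primrec.eq.comp hleft hright).of_eq fun _ => by simp only [funext_iff, Proportional]

theorem primrecRel_translateCriterion : PrimrecRel (TranslateCriterion (N := N)) := by
  have hcons : Primrec fun p : List (Fin N → ℤ) × (Fin N → ℤ) => p.2 :: p.1 :=
    Primrec.list_cons.comp .snd .fst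
  have hgcd : PrimrecPred fun p : List (Fin N → ℤ) × (Fin N → ℤ) => entriesGcd (p.2 :: p.1) = 1 :=
    Primrec.eq.comp (primrec_entriesGcd.comp hcons) (.const 1)
  have hproportional : PrimrecPred fun p : List (Fin N → ℤ) × (Fin N → ℤ) =>
      ∀ u ∈ p.2 :: p.1, ∀ v ∈ p.2 :: p.1, Proportional u v := by
    have hvec : PrimrecRel fun (l : List (Fin N → ℤ)) v => ∀ u ∈ l, Proportional u v :=
      primrecRel_proportional.forall_mem_list
    have hlist : PrimrecRel fun l₁ l₂ : List (Fin N → ℤ) => ∀ v ∈ l₁, ∀ u ∈ l₂, Proportional u v :=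
      PrimrecRel.forall_mem_list (hvec.comp .snd .fst)
    refine (hlist.comp hcons hcons).of_eq fun p => ?_
    exact ⟨fun h u hu v hv => h v hv u hu, fun h v hv u hu => h u hu v hv⟩
  have hX : Primrec fun p : List (Fin N → ℤ) × (Fin N → ℤ) => entriesGcd p.1 :=
    primrec_entriesGcd.comp .fst
  have hb : Primrec fun p : List (Fin N → ℤ) × (Fin N → ℤ) => entriesGcd [p.2] :=
    primrec_entriesGcd.comp (Primrec.list_cons.comp .snd (.const []))
  have hmodEq : PrimrecPred fun p : List (Fin N → ℤ) × (Fin N → ℤ) =>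
      entriesGcd [p.2] ≡ 1 [MOD entriesGcd p.1] :=
    Primrec.eq.comp (Primrec.nat_mod.comp hb hX) (Primrec.nat_mod.comp (.const 1) hX)
  have hdvd : PrimrecPred fun p : List (Fin N → ℤ) × (Fin N → ℤ) =>
      entriesGcd p.1 ∣ entriesGcd [p.2] + 1 :=
    primrecRel_nat_dvd.comp hX (Primrec.succ.comp hb)
  exact (hgcd.and (hproportional.not.or (hmodEq.or hdvd))).of_eq fun p => by
    rw [TranslateCriterion, imp_iff_not_or]

end Criterion

end UnimodularTranslate

/-- For every `N` there is an algorithm (a computable `Bool`-valued function, with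
respect to a standard encoding of the inputs: the finite subset `X ⊆ ℤ^N` is encoded
as a list of its elements) deciding, given `X` and `b ∈ ℤ^N`, whether some element
`v ∈ Span_ℤ(X) + b` has entries generating `ℤ` (equivalently, entries with gcd `1`). -/
theorem stmt_11 (N : ℕ) :
    ∃ f : List (Fin N → ℤ) × (Fin N → ℤ) → Bool, Computable f ∧
      ∀ (X : List (Fin N → ℤ)) (b : Fin N → ℤ),
        f (X, b) = true ↔
          ∃ w ∈ Submodule.span ℤ {v : Fin N → ℤ | v ∈ X},
            Submodule.span ℤ (Set.range (w + b)) = (⊤ : Submodule ℤ ℤ) := by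
  obtain ⟨_, hprimrec⟩ := UnimodularTranslate.primrecRel_translateCriterion (N := N)
  refine ⟨_, hprimrec.to_comp, fun X b => ?_⟩
  rw [decide_eq_true_iff]
  exact (UnimodularTranslate.exists_isUnimodular_add_iff_translateCriterion X b).symm
end

section
/- There exists an algorithm (a computable Bool-valued function with respect to a standard encoding of the inputs) that, given integer matrices A₁ ∈ M_{n₁×m₁}(ℤ) and A₂ ∈ M_{n₂×m₂}(ℤ), an (n₂ × n₁)-integer matrix inducing a ℤ-module homomorphism κ : M(A₁) → M(A₂), and d ∈ ℕ, decides whether there exists a surjective ℤ-module homomorphism ψ : M(A₁) → ℤ^d for which there is a ℤ-module homomorphism ψ̃ : M(A₂) → ℤ^d with ψ̃ ∘ κ = ψ. -/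
/-- A standard encoding of an integer matrix as its list of rows. -/
def encodeMatrix {n m : ℕ} (A : Fin n → Fin m → ℤ) : List (List ℤ) :=
  List.ofFn fun i => List.ofFn (A i)

/-!
For a matrix `A`, let `coker A` be the module it presents. A map `ψ` as in the theorem is
determined by its factor `ψ'` on `coker A₂`, so the question is whether some linear map
`coker A₂ → ℤᵈ` sends the image `N` of `B` onto `ℤᵈ`. A positive answer is certified by two integer
matrices. A negative answer has a finite certificate as well: over a principal ideal domain, either
such a map exists, or modulo torsion and some non-unit `p` the submodule `N` is generated by fewer
than `d` elements, which excludes a surjection onto the free module `(R/p)ᵈ`. To see this, split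
off rank-one quotients one at a time: by the Smith normal form, a submodule of a finite free module
`F` either surjects onto `R` under some functional on `F` or is contained in `pF` for some non-unit
`p`. Both the problem and its complement are thus recursively enumerable, and Post's theorem
applies.
-/

section FreeQuotients

open scoped Pointwise
open Submodule

variable {R : Type*} [CommRing R] [IsDomain R] [IsPrincipalIdealRing R]

theorem exists_dual_map_eq_top_or_le_smul_top {F : Type*} [AddCommGroup F] [Module R F]
    [Module.Free R F] [Module.Finite R F] (N : Submodule R F) :
    (∃ φ : F →ₗ[R] R, N.map φ = ⊤) ∨ ∃ p : R, ¬IsUnit p ∧ N ≤ p • ⊤ := by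
  obtain ⟨k, bF, bN, f, a, hbN⟩ := N.smithNormalForm (Module.Free.chooseBasis R F)
  obtain ⟨p, hp⟩ := IsPrincipalIdealRing.principal (Ideal.span (Set.range a))
  have hdvd (i : Fin k) : p ∣ a i :=
    Ideal.mem_span_singleton.1 (hp.le (Ideal.subset_span (Set.mem_range_self i)))
  by_cases hunit : IsUnit p
  · refine .inl ⟨bF.constr R fun _ => 1, top_le_iff.1 ?_⟩
    rw [← Ideal.span_singleton_eq_top.2 hunit, ← Ideal.submodule_span_eq, ← hp, Ideal.span,
      span_le]
    rintro _ ⟨i, rfl⟩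
    exact ⟨bN i, (bN i).2, by simp [hbN]⟩
  · refine .inr ⟨p, hunit, ?_⟩
    rw [← comap_subtype_eq_top, ← top_le_iff, ← bN.span_eq, span_le]
    rintro _ ⟨i, rfl⟩
    obtain ⟨q, hq⟩ := hdvd i
    refine ⟨q • bF (f i), mem_top, ?_⟩
    change p • q • bF (f i) = bN i
    rw [hbN, hq, mul_smul]

theorem exists_prod_map_eq_top_or_le_range_sup {F P : Type*} [AddCommGroup F]
    [Module R F] [Module.Free R F] [Module.Finite R F] [AddCommGroup P] [Module R P]
    [Module.Projective R P] {N : Submodule R F} {ψ : F →ₗ[R] P} (hψ : N.map ψ = ⊤) :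
    (∃ φ : F →ₗ[R] R, N.map (φ.prod ψ) = ⊤) ∨
      ∃ p : R, ¬IsUnit p ∧ ∃ σ : P →ₗ[R] F, N ≤ LinearMap.range σ ⊔ p • ⊤ := by
  have hsurj : Function.Surjective (ψ.domRestrict N) := by
    rw [← LinearMap.range_eq_top, LinearMap.range_domRestrict, hψ]
  obtain ⟨σ, hσ⟩ := Module.projective_lifting_property _ LinearMap.id hsurj
  replace hσ (v : P) : ψ (σ v) = v := LinearMap.congr_fun hσ v
  let π : F →ₗ[R] LinearMap.ker ψ :=
    (LinearMap.id - N.subtype ∘ₗ σ ∘ₗ ψ).codRestrict _ fun x => by simp [hσ]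
  have hπ (x : F) : (π x : F) = x - σ (ψ x) := rfl
  rcases exists_dual_map_eq_top_or_le_smul_top (N.comap (LinearMap.ker ψ).subtype) with
    ⟨φ, hφ⟩ | ⟨p, hp, hle⟩
  · refine .inl ⟨φ ∘ₗ π, eq_top_iff'.2 fun ⟨a, v⟩ => ?_⟩
    obtain ⟨y, hyN, hy⟩ : a ∈ map φ (comap (LinearMap.ker ψ).subtype N) := hφ ▸ mem_top
    have hψy : ψ y = 0 := y.2
    refine ⟨σ v + y, N.add_mem (σ v).2 hyN, ?_⟩
    have hπy : π (σ v + y) = y := Subtype.ext <| by simp [hπ, hσ, hψy]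
    simp [hσ, hψy, hπy, hy]
  · refine .inr ⟨p, hp, N.subtype ∘ₗ σ, fun x hx => ?_⟩
    obtain ⟨z, -, hz⟩ : π x ∈ p • (⊤ : Submodule R (LinearMap.ker ψ)) :=
      hle (N.sub_mem hx (σ (ψ x)).2)
    have hz' : p • (z : F) = x - σ (ψ x) := congrArg Subtype.val hz
    rw [mem_sup]
    exact ⟨σ (ψ x), ⟨ψ x, rfl⟩, p • (z : F), smul_mem_pointwise_smul _ _ _ mem_top, by simp [hz']⟩

theorem exists_pi_map_eq_top_or_le_range_sup {F : Type*} [AddCommGroup F]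
    [Module R F] [Module.Free R F] [Module.Finite R F] (N : Submodule R F) (d : ℕ) :
    (∃ ψ : F →ₗ[R] (Fin d → R), N.map ψ = ⊤) ∨
      ∃ r < d, ∃ p : R, ¬IsUnit p ∧ ∃ σ : (Fin r → R) →ₗ[R] F,
        N ≤ LinearMap.range σ ⊔ p • ⊤ := by
  induction d with
  | zero => exact .inl ⟨0, Subsingleton.elim _ _⟩
  | succ d ih =>
    rcases ih with ⟨ψ, hψ⟩ | ⟨r, hr, h⟩
    · rcases exists_prod_map_eq_top_or_le_range_sup hψ with ⟨φ, hφ⟩ | h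
      · refine .inl ⟨φ.vecCons ψ, ?_⟩
        change N.map ((Fin.consLinearEquiv R fun _ => R).toLinearMap ∘ₗ φ.prod ψ) = ⊤
        rw [map_comp, hφ, Submodule.map_top, LinearEquiv.range]
      · exact .inr ⟨d, d.lt_succ_self, h⟩
    · exact .inr ⟨r, hr.trans d.lt_succ_self, h⟩

theorem exists_pi_map_eq_top_or_le_range_sup_torsion {M : Type*} [AddCommGroup M]
    [Module R M] [Module.Finite R M] (N : Submodule R M) (d : ℕ) :
    (∃ ψ : M →ₗ[R] (Fin d → R), N.map ψ = ⊤) ∨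
      ∃ r < d, ∃ p : R, ¬IsUnit p ∧ ∃ σ : (Fin r → R) →ₗ[R] M,
        N ≤ LinearMap.range σ ⊔ p • ⊤ ⊔ torsion R M := by
  rcases exists_pi_map_eq_top_or_le_range_sup (N.map (torsion R M).mkQ) d with
    ⟨ψ, hψ⟩ | ⟨r, hr, p, hp, σ, hle⟩
  · exact .inl ⟨ψ ∘ₗ (torsion R M).mkQ, by rw [map_comp, hψ]⟩
  · obtain ⟨τ, rfl⟩ := Module.projective_lifting_property _ σ (torsion R M).mkQ_surjective
    refine .inr ⟨r, hr, p, hp, τ, ?_⟩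
    rwa [sup_comm, ← comap_map_mkQ, ← map_le_iff_le_comap, Submodule.map_sup, map_pointwise_smul,
      Submodule.map_top, range_mkQ, ← LinearMap.range_comp]

end FreeQuotients

theorem exists_smul_eq_zero_of_mem_torsion (R M : Type*) [CommRing R] [IsDomain R]
    [IsNoetherianRing R] [AddCommGroup M] [Module R M] [Module.Finite R M] :
    ∃ t : R, t ≠ 0 ∧ ∀ x ∈ Submodule.torsion R M, t • x = 0 := by
  obtain ⟨t, ht, ht'⟩ :=
    Submodule.annihilator_top_inter_nonZeroDivisors (Submodule.torsion_isTorsion (R := R) (M := M))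
  refine ⟨t, nonZeroDivisors.ne_zero ht', fun x hx => ?_⟩
  exact congrArg Subtype.val (Submodule.mem_annihilator.1 ht ⟨x, hx⟩ Submodule.mem_top)

section MatrixCertificates

open scoped Pointwise

variable {R : Type*} [CommRing R] {l m n : Type*}

theorem card_le_card_of_one_eq_mul_add_smul {ι κ : Type*} [Fintype ι] [Fintype κ] [DecidableEq ι]
    {p : R} (hp : ¬IsUnit p) {U : Matrix ι κ R} {V : Matrix κ ι R} {Z : Matrix ι ι R}
    (h : 1 = U * V + p • Z) : Fintype.card ι ≤ Fintype.card κ := by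
  let π := Ideal.Quotient.mk (Ideal.span {p})
  have : Nontrivial (R ⧸ Ideal.span {p}) :=
    Ideal.Quotient.nontrivial_iff.2 (mt Ideal.span_singleton_eq_top.1 hp)
  have hπp : π p = 0 := Ideal.Quotient.eq_zero_iff_mem.2 (Ideal.mem_span_singleton_self p)
  have hπZ : (p • Z).map π = 0 := Matrix.ext fun i j => by simp [hπp]
  have hπ : 1 = U.map π * V.map π := by
    simpa [hπZ, Matrix.map_add] using congrArg π.mapMatrix h
  calc
    Fintype.card ι = (U.map π * V.map π).rank := by rw [← hπ, Matrix.rank_one]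
    _ ≤ (U.map π).rank := Matrix.rank_mul_le_left _ _
    _ ≤ Fintype.card κ := Matrix.rank_le_card_width _

theorem exists_smul_eq_of_mkQ_mem {κ : Type*} [Fintype κ] [Fintype m] [DecidableEq κ]
    [DecidableEq m] {A : Matrix n m R} {X : Matrix n κ R} {t p : R} {v : n → R}
    (ht : ∀ x ∈ Submodule.torsion R ((n → R) ⧸ LinearMap.range (Matrix.toLin' A)), t • x = 0)
    (hv : (LinearMap.range (Matrix.toLin' A)).mkQ v ∈
      LinearMap.range ((LinearMap.range (Matrix.toLin' A)).mkQ ∘ₗ Matrix.toLin' X) ⊔ p • ⊤ ⊔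
        Submodule.torsion R ((n → R) ⧸ LinearMap.range (Matrix.toLin' A))) :
    ∃ y z w, t • v = t • (X.mulVec y + p • z) + A.mulVec w := by
  obtain ⟨_, hx, u, hu, hsum⟩ := Submodule.mem_sup.1 hv
  obtain ⟨_, ⟨y, rfl⟩, _, ⟨z, -, rfl⟩, rfl⟩ := Submodule.mem_sup.1 hx
  obtain ⟨z, rfl⟩ := Submodule.mkQ_surjective _ z
  have hu' : u = Submodule.mkQ _ (v - (X.mulVec y + p • z)) := by
    simpa using eq_sub_of_add_eq' hsum
  have hmem : Submodule.mkQ (LinearMap.range (Matrix.toLin' A))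
      (t • (v - (X.mulVec y + p • z))) = 0 := by
    rw [map_smul, ← hu', ht u hu]
  obtain ⟨w, hw⟩ := (Submodule.Quotient.mk_eq_zero _).1 hmem
  refine ⟨y, z, w, ?_⟩
  rw [← Matrix.toLin'_apply A, hw]
  module

variable [Fintype l] [Fintype n]

/-- A certificate that some `C : Rⁿ → Rᵈ` vanishes on the columns of `A` and maps the column span
of `B` onto `Rᵈ`: equivalently, the image of `B` in the module `coker A` presented by `A` surjects
onto `Rᵈ` under a linear map defined on all of `coker A`. The matrix `D` gives preimages of the
standard basis vectors. -/
def HasSplitting (A : Matrix n m R) (B : Matrix n l R) (d : ℕ) : Prop :=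
  ∃ (C : Matrix (Fin d) n R) (D : Matrix l (Fin d) R), C * A = 0 ∧ C * B * D = 1

/-- A certificate that the columns of `B`, modulo torsion in the module `coker A` presented by `A`
and modulo some non-unit `p`, lie in a submodule generated by fewer than `d` elements, the columns
of `X`. The nonzero scalar `t` absorbs the torsion. -/
def HasObstruction [Fintype m] (A : Matrix n m R) (B : Matrix n l R) (d : ℕ) : Prop :=
  ∃ (r : ℕ) (t p : R) (X : Matrix n (Fin r) R) (Y : Matrix (Fin r) l R) (Z : Matrix n l R)
    (W : Matrix m l R), r < d ∧ t ≠ 0 ∧ ¬IsUnit p ∧ t • B = t • (X * Y + p • Z) + A * W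

theorem hasSplitting_iff_exists_surjective [Fintype m] [DecidableEq l] [DecidableEq m]
    {A : Matrix n m R} {B : Matrix n l R} {d : ℕ} :
    HasSplitting A B d ↔ ∃ ψ : ((n → R) ⧸ LinearMap.range (Matrix.toLin' A)) →ₗ[R] (Fin d → R),
      Function.Surjective (ψ ∘ₗ Submodule.mkQ _ ∘ₗ Matrix.toLin' B) := by
  classical
  constructor
  · rintro ⟨C, D, hCA, hCBD⟩
    have hker : LinearMap.range (Matrix.toLin' A) ≤ LinearMap.ker (Matrix.toLin' C) := by
      rw [LinearMap.range_le_ker_iff, ← Matrix.toLin'_mul, hCA, map_zero]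
    refine ⟨Submodule.liftQ _ (Matrix.toLin' C) hker, ?_⟩
    rw [← LinearMap.comp_assoc, Submodule.liftQ_mkQ, ← Matrix.toLin'_mul]
    exact Matrix.mulVec_surjective_iff_exists_right_inverse.2 ⟨D, hCBD⟩
  · rintro ⟨ψ, hψ⟩
    obtain ⟨C, hC⟩ := Matrix.toLin'.surjective (ψ ∘ₗ Submodule.mkQ _)
    rw [← LinearMap.comp_assoc, ← hC, ← Matrix.toLin'_mul] at hψ
    obtain ⟨D, hD⟩ := Matrix.mulVec_surjective_iff_exists_right_inverse.1 hψ
    refine ⟨C, D, Matrix.toLin'.injective ?_, hD⟩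
    rw [Matrix.toLin'_mul, hC, map_zero, LinearMap.comp_assoc, LinearMap.range_mkQ_comp,
      LinearMap.comp_zero]

theorem HasSplitting.not_hasObstruction [IsDomain R] [Fintype m] {A : Matrix n m R}
    {B : Matrix n l R} {d : ℕ} (h : HasSplitting A B d) : ¬HasObstruction A B d := by
  rintro ⟨r, t, p, X, Y, Z, W, hr, ht, hp, hB⟩
  obtain ⟨C, D, hCA, hCBD⟩ := h
  have hCB : C * B = C * (X * Y + p • Z) := by
    refine smul_right_injective _ ht ?_
    change t • (C * B) = t • (C * (X * Y + p • Z))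
    rw [← Matrix.mul_smul, hB, Matrix.mul_add, ← Matrix.mul_assoc, hCA, Matrix.zero_mul, add_zero,
      Matrix.mul_smul]
  have hrank : 1 = C * X * (Y * D) + p • (C * Z * D) := by
    rw [← hCBD, hCB]
    simp only [Matrix.mul_add, Matrix.add_mul, Matrix.mul_smul, Matrix.smul_mul, Matrix.mul_assoc]
  exact hr.not_ge (by simpa using card_le_card_of_one_eq_mul_add_smul hp hrank)

theorem hasSplitting_or_hasObstruction [IsDomain R] [IsPrincipalIdealRing R] [Fintype m]
    (A : Matrix n m R) (B : Matrix n l R) (d : ℕ) : HasSplitting A B d ∨ HasObstruction A B d := by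
  classical
  let q := (LinearMap.range (Matrix.toLin' A)).mkQ
  rcases exists_pi_map_eq_top_or_le_range_sup_torsion (LinearMap.range (q ∘ₗ Matrix.toLin' B)) d
    with ⟨ψ, hψ⟩ | ⟨r, hr, p, hp, σ, hle⟩
  · refine .inl (hasSplitting_iff_exists_surjective.2 ⟨ψ, ?_⟩)
    rw [← LinearMap.range_eq_top, LinearMap.range_comp, hψ]
  · obtain ⟨t, ht, htorsion⟩ := exists_smul_eq_zero_of_mem_torsion R
      ((n → R) ⧸ LinearMap.range (Matrix.toLin' A))
    obtain ⟨τ, rfl⟩ := Module.projective_lifting_property q σ (Submodule.mkQ_surjective _)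
    obtain ⟨X, rfl⟩ := Matrix.toLin'.surjective τ
    have hcol (j : l) : ∃ y z w, t • B.col j = t • (X.mulVec y + p • z) + A.mulVec w :=
      exists_smul_eq_of_mkQ_mem htorsion (hle ⟨Pi.single j 1, by simp [q]⟩)
    choose y z w hyzw using hcol
    refine .inr ⟨r, t, p, X, (Matrix.of y).transpose, (Matrix.of z).transpose,
      (Matrix.of w).transpose, hr, ht, hp, Matrix.ext fun i j => ?_⟩
    simpa [Matrix.mul_apply, Matrix.mulVec, dotProduct] using congrFun (hyzw j) i

theorem not_hasSplitting_iff_hasObstruction [IsDomain R] [IsPrincipalIdealRing R] [Fintype m]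
    {A : Matrix n m R} {B : Matrix n l R} {d : ℕ} :
    ¬HasSplitting A B d ↔ HasObstruction A B d :=
  ⟨(hasSplitting_or_hasObstruction A B d).resolve_left, fun h h' => h'.not_hasObstruction h⟩

theorem exists_surjective_comp_mapQ_iff_hasSplitting {k : Type*} [Fintype k] [Fintype m]
    [DecidableEq k] [DecidableEq l] [DecidableEq m] {A₁ : Matrix l k R}
    {A₂ : Matrix n m R} {B : Matrix n l R} {d : ℕ}
    (hB : LinearMap.range (Matrix.toLin' A₁) ≤
      (LinearMap.range (Matrix.toLin' A₂)).comap (Matrix.toLin' B)) :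
    (∃ ψ : ((l → R) ⧸ LinearMap.range (Matrix.toLin' A₁)) →ₗ[R] (Fin d → R),
        Function.Surjective ψ ∧
        ∃ ψ' : ((n → R) ⧸ LinearMap.range (Matrix.toLin' A₂)) →ₗ[R] (Fin d → R),
          ψ' ∘ₗ Submodule.mapQ _ _ (Matrix.toLin' B) hB = ψ) ↔ HasSplitting A₂ B d := by
  classical
  have hsurj (ψ' : ((n → R) ⧸ LinearMap.range (Matrix.toLin' A₂)) →ₗ[R] (Fin d → R)) :
      Function.Surjective (ψ' ∘ₗ Submodule.mkQ _ ∘ₗ Matrix.toLin' B) ↔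
        Function.Surjective (ψ' ∘ₗ Submodule.mapQ _ _ (Matrix.toLin' B) hB) := by
    rw [← Submodule.mapQ_mkQ (h := hB), ← LinearMap.comp_assoc, LinearMap.coe_comp]
    exact (LinearMap.range (Matrix.toLin' A₁)).mkQ_surjective.of_comp_iff _
  simp only [hasSplitting_iff_exists_surjective, hsurj]
  exact ⟨fun ⟨_, hψ, ψ', h⟩ => ⟨ψ', h ▸ hψ⟩, fun ⟨ψ', hψ⟩ => ⟨_, hψ, ψ', rfl⟩⟩

end MatrixCertificates

section IntegerArithmetic

-- The encoding of `ℤ` sends `n` to `2 * n` and `-(n + 1)` to `2 * n + 1`.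
theorem primrec_int_toNat : Primrec Int.toNat := by
  have h : Primrec fun z : ℤ =>
      if Encodable.encode z % 2 = 0 then Encodable.encode z / 2 else 0 :=
    .ite (Primrec.eq.comp (Primrec.nat_mod.comp .encode (.const 2)) (.const 0))
      (Primrec.nat_div.comp .encode (.const 2)) (.const 0)
  refine h.of_eq fun z => ?_
  cases z with
  | ofNat n =>
    change (if 2 * n % 2 = 0 then 2 * n / 2 else 0) = n
    simp
  | negSucc n =>
    change (if (2 * n + 1) % 2 = 0 then (2 * n + 1) / 2 else 0) = 0
    simp

theorem primrec_int_toNat_neg : Primrec fun z : ℤ => (-z).toNat := by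
  have h : Primrec fun z : ℤ =>
      if Encodable.encode z % 2 = 0 then 0 else Encodable.encode z / 2 + 1 :=
    .ite (Primrec.eq.comp (Primrec.nat_mod.comp .encode (.const 2)) (.const 0))
      (.const 0) (Primrec.succ.comp (Primrec.nat_div.comp .encode (.const 2)))
  refine h.of_eq fun z => ?_
  cases z with
  | ofNat n =>
    change (if 2 * n % 2 = 0 then 0 else 2 * n / 2 + 1) = (-(n : ℤ)).toNat
    simp
  | negSucc n =>
    change (if (2 * n + 1) % 2 = 0 then 0 else (2 * n + 1) / 2 + 1) = n + 1
    grind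

theorem primrec₂_natCast_sub_natCast : Primrec₂ fun a b : ℕ => (a : ℤ) - b := by
  have h : Primrec₂ fun a b : ℕ => if b ≤ a then 2 * (a - b) else 2 * (b - a - 1) + 1 :=
    Primrec.ite (Primrec.nat_le.comp .snd .fst)
      (Primrec.nat_mul.comp (.const 2) (Primrec.nat_sub.comp .fst .snd))
      (Primrec.succ.comp (Primrec.nat_mul.comp (.const 2)
        (Primrec.nat_sub.comp (Primrec.nat_sub.comp .snd .fst) (.const 1))))
  refine Primrec₂.encode_iff.1 (h.of_eq fun a b => ?_)
  split_ifs with hba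
  · obtain ⟨c, rfl⟩ := Nat.exists_eq_add_of_le hba
    rw [Nat.add_sub_cancel_left, Nat.cast_add, add_sub_cancel_left]
    rfl
  · obtain ⟨c, rfl⟩ := Nat.exists_eq_add_of_lt (not_le.1 hba)
    have hneg : (a : ℤ) - (a + c + 1 : ℕ) = Int.negSucc c := by omega
    rw [hneg, add_assoc, Nat.add_sub_cancel_left, Nat.add_sub_cancel]
    rfl

theorem primrec₂_int_add : Primrec₂ fun a b : ℤ => a + b := by
  have h : Primrec₂ fun a b : ℤ =>
      ((a.toNat + b.toNat : ℕ) : ℤ) - ((-a).toNat + (-b).toNat : ℕ) :=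
    primrec₂_natCast_sub_natCast.comp
      (Primrec.nat_add.comp (primrec_int_toNat.comp .fst) (primrec_int_toNat.comp .snd))
      (Primrec.nat_add.comp (primrec_int_toNat_neg.comp .fst) (primrec_int_toNat_neg.comp .snd))
  exact h.of_eq fun a b => by omega

theorem primrec₂_int_mul : Primrec₂ fun a b : ℤ => a * b := by
  have ha : Primrec₂ fun a _ : ℤ => a.toNat := primrec_int_toNat.comp .fst
  have hb : Primrec₂ fun _ b : ℤ => b.toNat := primrec_int_toNat.comp .snd
  have ha' : Primrec₂ fun a _ : ℤ => (-a).toNat := primrec_int_toNat_neg.comp .fst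
  have hb' : Primrec₂ fun _ b : ℤ => (-b).toNat := primrec_int_toNat_neg.comp .snd
  have h := primrec₂_natCast_sub_natCast.comp₂
    (Primrec.nat_add.comp₂ (Primrec.nat_mul.comp₂ ha hb) (Primrec.nat_mul.comp₂ ha' hb'))
    (Primrec.nat_add.comp₂ (Primrec.nat_mul.comp₂ ha hb') (Primrec.nat_mul.comp₂ ha' hb))
  refine h.of_eq fun a b => ?_
  conv_rhs => rw [← Int.toNat_sub_toNat_neg a, ← Int.toNat_sub_toNat_neg b]
  push_cast
  ring

theorem primrecPred_int_isUnit : PrimrecPred fun z : ℤ => IsUnit z :=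
  ((Primrec.eq.comp .id (.const 1)).or (Primrec.eq.comp .id (.const (-1)))).of_eq fun _ =>
    Int.isUnit_iff.symm

variable {α : Type*} [Primcodable α]

theorem primrec_sum_range {f : α → ℕ → ℤ} {n : α → ℕ} (hf : Primrec₂ f) (hn : Primrec n) :
    Primrec fun a => ∑ k ∈ Finset.range (n a), f a k := by
  have hrec := Primrec.nat_rec' hn (.const (0 : ℤ)) (h := fun a (p : ℕ × ℤ) => p.2 + f a p.1)
    (primrec₂_int_add.comp (Primrec.snd.comp .snd) (hf.comp .fst (Primrec.fst.comp .snd)))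
  refine hrec.of_eq fun a => ?_
  induction n a with
  | zero => rfl
  | succ k ih => rw [Finset.sum_range_succ, ← ih]

end IntegerArithmetic

section Predicates

variable {α β : Type*} [Primcodable α] [Primcodable β]

theorem primrecPred_forall_lt {p : α → ℕ → Prop} {n : α → ℕ} (hp : PrimrecRel p)
    (hn : Primrec n) : PrimrecPred fun a => ∀ k < n a, p a k := by
  have hswap : PrimrecRel fun (k : ℕ) (a : α) => p a k := hp.comp .snd .fst
  exact (hswap.forall_mem_list.comp (Primrec.list_range.comp hn) .id).of_eq (by simp)

theorem rePred_exists_of_primrecRel {p : α → β → Prop} (hp : PrimrecRel p) :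
    REPred fun a => ∃ b, p a b := by
  classical
  let search (a : α) (k : ℕ) : Option β := (Encodable.decode k).bind (Option.guard (p a ·))
  have hsearch : Primrec₂ search := by
    refine Primrec.option_bind (Primrec.decode.comp .snd) ?_
    exact Primrec.option_guard (p := fun x : (α × ℕ) × β => p x.1.1)
      (hp.comp (Primrec.fst.comp (Primrec.fst.comp .fst)) .snd) .snd
  refine (Partrec.rfindOpt hsearch.to_comp).dom_re.of_eq fun a => ?_
  simp only [Nat.rfindOpt_dom, search, Option.mem_def, Option.bind_eq_some_iff,
    Option.guard_eq_some_iff, decide_eq_true_eq]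
  exact ⟨fun ⟨_, _, b, _, _, hb⟩ => ⟨b, hb⟩,
    fun ⟨b, hb⟩ => ⟨_, b, b, Encodable.encodek b, rfl, hb⟩⟩

end Predicates

section MatrixFamilies

variable {α β : Type*} [Primcodable α] [Primcodable β]

/-- A family of integer matrices of varying size whose entries are given by a single primitive
recursive function of the parameter and the two indices. -/
def PrimrecMatrix {n m : α → ℕ} (M : ∀ a, Matrix (Fin (n a)) (Fin (m a)) ℤ) : Prop :=
  ∃ f : α → ℕ × ℕ → ℤ, Primrec₂ f ∧ ∀ a i j, M a i j = f a (i, j)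

namespace PrimrecMatrix

variable {k n m : α → ℕ} {M N : ∀ a, Matrix (Fin (n a)) (Fin (m a)) ℤ}

theorem comp (hM : PrimrecMatrix M) {f : β → α} (hf : Primrec f) :
    PrimrecMatrix fun b => M (f b) :=
  let ⟨g, hg, hMg⟩ := hM
  ⟨fun b => g (f b), hg.comp₂ (hf.comp .fst) .snd, fun b => hMg (f b)⟩

theorem zero : PrimrecMatrix fun a => (0 : Matrix (Fin (n a)) (Fin (m a)) ℤ) :=
  ⟨fun _ _ => 0, .const 0, fun _ _ _ => rfl⟩

theorem one : PrimrecMatrix fun a => (1 : Matrix (Fin (n a)) (Fin (n a)) ℤ) :=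
  ⟨fun _ ij => if ij.1 = ij.2 then 1 else 0,
    .ite (Primrec.eq.comp (Primrec.fst.comp .snd) (Primrec.snd.comp .snd)) (.const 1) (.const 0),
    fun _ _ _ => by simp only [Matrix.one_apply, Fin.ext_iff]⟩

theorem add (hM : PrimrecMatrix M) (hN : PrimrecMatrix N) : PrimrecMatrix fun a => M a + N a :=
  let ⟨f, hf, hMf⟩ := hM
  let ⟨g, hg, hNg⟩ := hN
  ⟨fun a ij => f a ij + g a ij, primrec₂_int_add.comp₂ hf hg, fun a i j => by
    simp only [Matrix.add_apply, hMf, hNg]⟩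

theorem smul {c : α → ℤ} (hc : Primrec c) (hM : PrimrecMatrix M) :
    PrimrecMatrix fun a => c a • M a :=
  let ⟨f, hf, hMf⟩ := hM
  ⟨fun a ij => c a * f a ij, primrec₂_int_mul.comp₂ (hc.comp .fst) hf, fun a i j => by
    simp only [Matrix.smul_apply, hMf, smul_eq_mul]⟩

theorem mul {M : ∀ a, Matrix (Fin (k a)) (Fin (n a)) ℤ} (hn : Primrec n)
    (hM : PrimrecMatrix M) (hN : PrimrecMatrix N) : PrimrecMatrix fun a => M a * N a := by
  obtain ⟨f, hf, hMf⟩ := hM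
  obtain ⟨g, hg, hNg⟩ := hN
  have hi : Primrec fun x : (α × ℕ × ℕ) × ℕ => x.1.2.1 := Primrec.fst.comp (Primrec.snd.comp .fst)
  have hj : Primrec fun x : (α × ℕ × ℕ) × ℕ => x.1.2.2 := Primrec.snd.comp (Primrec.snd.comp .fst)
  refine ⟨fun a ij => ∑ s ∈ Finset.range (n a), f a (ij.1, s) * g a (s, ij.2), ?_, fun a i j => ?_⟩
  · exact primrec_sum_range (primrec₂_int_mul.comp
      (hf.comp (Primrec.fst.comp .fst) (hi.pair .snd))
      (hg.comp (Primrec.fst.comp .fst) (Primrec.snd.pair hj))) (hn.comp .fst)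
  · simp only [Matrix.mul_apply, hMf, hNg, Finset.sum_range]

theorem primrecPred_eq (hn : Primrec n) (hm : Primrec m) (hM : PrimrecMatrix M)
    (hN : PrimrecMatrix N) : PrimrecPred fun a => M a = N a := by
  obtain ⟨f, hf, hMf⟩ := hM
  obtain ⟨g, hg, hNg⟩ := hN
  have hentry : PrimrecRel fun (x : α × ℕ) (j : ℕ) => f x.1 (x.2, j) = g x.1 (x.2, j) := by
    have hij : Primrec₂ fun (x : α × ℕ) (j : ℕ) => (x.2, j) := (Primrec.snd.comp .fst).pair .snd
    exact Primrec.eq.comp (hf.comp (Primrec.fst.comp .fst) hij)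
      (hg.comp (Primrec.fst.comp .fst) hij)
  have hrow := primrecPred_forall_lt hentry (hm.comp .fst)
  refine (primrecPred_forall_lt (p := fun a i => ∀ j < m a, f a (i, j) = g a (i, j))
    hrow hn).of_eq fun a => ?_
  simp only [← Matrix.ext_iff, hMf, hNg, Fin.forall_iff]

end PrimrecMatrix

/-- The `n × m` integer matrix with the given list of rows, a left inverse of `encodeMatrix`;
missing entries are read as `0` and superfluous ones are ignored. -/
def ofRows (n m : ℕ) (L : List (List ℤ)) : Matrix (Fin n) (Fin m) ℤ :=
  Matrix.of fun i j => (L.getD i []).getD j 0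

theorem ofRows_encodeMatrix {n m : ℕ} (A : Fin n → Fin m → ℤ) :
    ofRows n m (encodeMatrix A) = Matrix.of A := by
  ext i j
  simp [ofRows, encodeMatrix, List.getD_eq_getElem?_getD]

theorem ofRows_surjective (n m : ℕ) : Function.Surjective (ofRows n m) :=
  fun A => ⟨encodeMatrix A, ofRows_encodeMatrix A⟩

theorem primrecMatrix_ofRows {n m : α → ℕ} {L : α → List (List ℤ)} (hL : Primrec L) :
    PrimrecMatrix fun a => ofRows (n a) (m a) (L a) :=
  ⟨fun a ij => ((L a).getD ij.1 []).getD ij.2 0,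
    (Primrec.list_getD 0).comp ((Primrec.list_getD []).comp (hL.comp .fst) (Primrec.fst.comp .snd))
      (Primrec.snd.comp .snd), fun _ _ _ => rfl⟩

end MatrixFamilies

section Decidability

variable {α : Type*} [Primcodable α] {l m n d : α → ℕ}
  {A : ∀ a, Matrix (Fin (n a)) (Fin (m a)) ℤ} {B : ∀ a, Matrix (Fin (n a)) (Fin (l a)) ℤ}

theorem rePred_hasSplitting (hl : Primrec l) (hm : Primrec m) (hn : Primrec n) (hd : Primrec d)
    (hA : PrimrecMatrix A) (hB : PrimrecMatrix B) :
    REPred fun a => HasSplitting (A a) (B a) (d a) := by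
  have hC := primrecMatrix_ofRows (n := fun x : α × List (List ℤ) × List (List ℤ) => d x.1)
    (m := fun x => n x.1) (Primrec.fst.comp .snd)
  have hD := primrecMatrix_ofRows (n := fun x : α × List (List ℤ) × List (List ℤ) => l x.1)
    (m := fun x => d x.1) (Primrec.snd.comp .snd)
  have hcert := (PrimrecMatrix.primrecPred_eq (hd.comp .fst) (hm.comp .fst)
      (.mul (hn.comp .fst) hC (hA.comp .fst)) .zero).and
    (PrimrecMatrix.primrecPred_eq (hd.comp .fst) (hd.comp .fst)
      (.mul (hl.comp .fst) (.mul (hn.comp .fst) hC (hB.comp .fst)) hD) .one)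
  exact (rePred_exists_of_primrecRel hcert.primrecRel).of_eq fun a => by
    simp only [HasSplitting, (ofRows_surjective _ _).exists, Prod.exists]

theorem rePred_hasObstruction (hl : Primrec l) (hm : Primrec m) (hn : Primrec n)
    (hd : Primrec d) (hA : PrimrecMatrix A) (hB : PrimrecMatrix B) :
    REPred fun a => HasObstruction (A a) (B a) (d a) := by
  let Rows := List (List ℤ)
  let Certificate := ℕ × ℤ × ℤ × Rows × Rows × Rows × Rows
  have hr : Primrec fun x : α × Certificate => x.2.1 := Primrec.fst.comp .snd
  have htail : Primrec fun x : α × Certificate => x.2.2 := Primrec.snd.comp .snd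
  have ht : Primrec fun x : α × Certificate => x.2.2.1 := Primrec.fst.comp htail
  have hp : Primrec fun x : α × Certificate => x.2.2.2.1 :=
    Primrec.fst.comp (Primrec.snd.comp htail)
  have hmats : Primrec fun x : α × Certificate => x.2.2.2.2 :=
    Primrec.snd.comp (Primrec.snd.comp htail)
  have hX := primrecMatrix_ofRows (n := fun x : α × Certificate => n x.1) (m := fun x => x.2.1)
    (Primrec.fst.comp hmats)
  have hY := primrecMatrix_ofRows (n := fun x : α × Certificate => x.2.1) (m := fun x => l x.1)
    (Primrec.fst.comp (Primrec.snd.comp hmats))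
  have hZ := primrecMatrix_ofRows (n := fun x : α × Certificate => n x.1) (m := fun x => l x.1)
    (Primrec.fst.comp (Primrec.snd.comp (Primrec.snd.comp hmats)))
  have hW := primrecMatrix_ofRows (n := fun x : α × Certificate => m x.1) (m := fun x => l x.1)
    (Primrec.snd.comp (Primrec.snd.comp (Primrec.snd.comp hmats)))
  have heq := PrimrecMatrix.primrecPred_eq (hn.comp .fst) (hl.comp .fst)
    (.smul ht (hB.comp .fst))
    (.add (.smul ht (.add (.mul hr hX hY) (.smul hp hZ))) (.mul (hm.comp .fst) (hA.comp .fst) hW))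
  have hcert := (Primrec.nat_lt.comp hr (hd.comp .fst)).and
    ((Primrec.eq.comp ht (.const 0)).not.and ((primrecPred_int_isUnit.comp hp).not.and heq))
  exact (rePred_exists_of_primrecRel hcert.primrecRel).of_eq fun a => by
    simp only [HasObstruction, (ofRows_surjective _ _).exists, Prod.exists, Certificate, Rows,
      ne_eq]

theorem computablePred_hasSplitting (hl : Primrec l) (hm : Primrec m) (hn : Primrec n)
    (hd : Primrec d) (hA : PrimrecMatrix A) (hB : PrimrecMatrix B) :
    ComputablePred fun a => HasSplitting (A a) (B a) (d a) :=
  ComputablePred.computable_iff_re_compl_re'.2 ⟨rePred_hasSplitting hl hm hn hd hA hB,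
    (rePred_hasObstruction hl hm hn hd hA hB).of_eq fun _ =>
      not_hasSplitting_iff_hasObstruction.symm⟩

end Decidability

/-- There is an algorithm (a computable `Bool`-valued function with respect to a
standard encoding of the inputs) that, given integer matrices `A₁ ∈ M_{n₁×m₁}(ℤ)`,
`A₂ ∈ M_{n₂×m₂}(ℤ)`, an `(n₂ × n₁)`-integer matrix `B` inducing a `ℤ`-module
homomorphism `κ : M(A₁) → M(A₂)` between the presented modules
`M(Aᵢ) := ℤ^{nᵢ}/{Aᵢ·x}`, and `d ∈ ℕ`, decides whether there exists a surjective
`ℤ`-module homomorphism `ψ : M(A₁) → ℤ^d` for which there is a `ℤ`-module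
homomorphism `ψ̃ : M(A₂) → ℤ^d` with `ψ̃ ∘ κ = ψ`. -/
theorem stmt_14 :
    ∃ f : (ℕ × ℕ × ℕ × ℕ) × (List (List ℤ) × List (List ℤ) × List (List ℤ) × ℕ) → Bool,
      Computable f ∧
      ∀ (n₁ m₁ n₂ m₂ : ℕ) (A₁ : Fin n₁ → Fin m₁ → ℤ) (A₂ : Fin n₂ → Fin m₂ → ℤ)
        (B : Fin n₂ → Fin n₁ → ℤ) (d : ℕ)
        (hB : LinearMap.range (Matrix.toLin' (Matrix.of A₁)) ≤
          Submodule.comap (Matrix.toLin' (Matrix.of B))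
            (LinearMap.range (Matrix.toLin' (Matrix.of A₂)))),
        (f ((n₁, m₁, n₂, m₂), (encodeMatrix A₁, encodeMatrix A₂, encodeMatrix B, d))
            = true ↔
          ∃ ψ : ((Fin n₁ → ℤ) ⧸ LinearMap.range (Matrix.toLin' (Matrix.of A₁)))
              →ₗ[ℤ] (Fin d → ℤ),
            Function.Surjective ψ ∧
            ∃ ψ' : ((Fin n₂ → ℤ) ⧸ LinearMap.range (Matrix.toLin' (Matrix.of A₂)))
                →ₗ[ℤ] (Fin d → ℤ),
              ψ'.comp (Submodule.mapQ _ _ (Matrix.toLin' (Matrix.of B)) hB) = ψ) := by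
  classical
  let Rows := List (List ℤ)
  let Input := (ℕ × ℕ × ℕ × ℕ) × (Rows × Rows × Rows × ℕ)
  have hdims : Primrec fun x : Input => x.1.2.2 := Primrec.snd.comp (Primrec.snd.comp .fst)
  have hdata : Primrec fun x : Input => x.2.2 := Primrec.snd.comp .snd
  have hcomp := computablePred_hasSplitting (l := fun x : Input => x.1.1)
    (m := fun x => x.1.2.2.2) (n := fun x => x.1.2.2.1) (d := fun x => x.2.2.2.2)
    (Primrec.fst.comp .fst) (Primrec.snd.comp hdims) (Primrec.fst.comp hdims)
    (Primrec.snd.comp (Primrec.snd.comp hdata)) (primrecMatrix_ofRows (Primrec.fst.comp hdata))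
    (primrecMatrix_ofRows (Primrec.fst.comp (Primrec.snd.comp hdata)))
  refine ⟨_, hcomp.decide, fun n₁ m₁ n₂ m₂ A₁ A₂ B d hB => ?_⟩
  rw [decide_eq_true_iff, exists_surjective_comp_mapQ_iff_hasSplitting, ofRows_encodeMatrix,
    ofRows_encodeMatrix]
end
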